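/- Let r ≥ 3 and let n ≥ (r-1)(2r+1)/2 be an integer. Then the positive codegree Turán number of T_r satisfies co⁺ex(n, T_r) = ⌊n/r⌋, i.e. the maximum of δ⁺_{r-1}(H) over all n-vertex T_r-free r-graphs H (with at least one edge) equals ⌊n/r⌋. -/

import Mathlib

variable {V : Type*} [Fintype V] [DecidableEq V]

/-- The (r-1)-shadow of an r-graph: all (r-1)-sets contained in some edge. -/
def sshadow (r : ℕ) (H : Finset (Finset V)) : Finset (Finset V) :=
  Finset.univ.filter (fun e => e.card = r - 1 ∧ ∃ E ∈ H, e ⊆ E)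

/-- The codegree neighborhood of a set `e`: vertices `v` with `e ∪ {v} ∈ H`. -/
def nbhd (H : Finset (Finset V)) (e : Finset V) : Finset V :=
  Finset.univ.filter (fun v => insert v e ∈ H)

/-- The neighborhood of a vertex. -/
def vnbhd (H : Finset (Finset V)) (v : V) : Finset V :=
  Finset.univ.filter (fun u => u ≠ v ∧ ∃ E ∈ H, u ∈ E ∧ v ∈ E)

/-- `H` is T_r-free. -/
def IsTrFree (r : ℕ) (H : Finset (Finset V)) : Prop :=
  ¬ ∃ (S W : Finset V) (a b : V),
      S.card = r - 1 ∧ W.card = r - 2 ∧ a ≠ b ∧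
      a ∉ S ∧ b ∉ S ∧ a ∉ W ∧ b ∉ W ∧ Disjoint S W ∧
      insert a S ∈ H ∧ insert b S ∈ H ∧ insert a (insert b W) ∈ H

/-- A set of vertices is independent. -/
def IsIndep (H : Finset (Finset V)) (I : Finset V) : Prop :=
  ∀ E ∈ H, (E ∩ I).card ≤ 1

/-- `H` is r-partite. -/
def IsRPartite (r : ℕ) (H : Finset (Finset V)) : Prop :=
  ∃ P : Fin r → Finset V, (∀ v : V, ∃! i, v ∈ P i) ∧ ∀ i, IsIndep H (P i)

/-- Minimum positive codegree. -/
noncomputable def minPosCodeg (r : ℕ) (H : Finset (Finset V)) : ℕ :=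
  sInf {k | ∃ e ∈ sshadow r H, (nbhd H e).card = k}

/-!
Let every shadow set of a `T_r`-free `r`-graph `H` have codegree at least `r`. An edge through two
vertices `a`, `b` can be moved off any `(r-1)`-set `S` avoiding them, exchanging its vertices in `S`
one at a time: each exchange has at least `r > |S|` candidates. Hence the neighbourhoods of
`E \ {i}` and `E \ {j}`, for distinct vertices `i`, `j` of an edge `E`, are disjoint: if `x` were in
both, then `E` and `(E \ {i}) ∪ {x}`, together with an edge through `i` and `x` moved off `E \ {i}`,
would form a `T_r`. So the `r` neighbourhoods of the facets of `E` are disjoint, which bounds the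
codegree by `n / r`; a codegree below `r` is at most `r - 1 ≤ n / r` anyway. The complete
`r`-partite `r`-graph with parts of size at least `⌊n / r⌋` attains the bound.
-/

section

open Finset FinsetFamily

variable {r d : ℕ} {H : Finset (Finset V)} {E e : Finset V} {a b v : V}

lemma mem_nbhd : v ∈ nbhd H e ↔ insert v e ∈ H := by
  simp only [nbhd, mem_filter_univ]

lemma sshadow_eq_shadow (hr : r ≠ 0) (hH : (H : Set (Finset V)).Sized r) :
    sshadow r H = ∂ H := by
  ext e
  simp only [sshadow, mem_filter_univ, mem_shadow_iff_exists_mem_card_add_one]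
  constructor
  · rintro ⟨he, E, hE, heE⟩
    exact ⟨E, hE, heE, by rw [hH hE]; omega⟩
  · rintro ⟨E, hE, heE, hcard⟩
    rw [hH hE] at hcard
    exact ⟨by omega, E, hE, heE⟩

omit [Fintype V] in
lemma shadow_nonempty (hr : r ≠ 0) (hH : (H : Set (Finset V)).Sized r) (hne : H.Nonempty) :
    (∂ H).Nonempty := by
  obtain ⟨E, hE⟩ := hne
  obtain ⟨w, hw⟩ : E.Nonempty := by rw [← card_ne_zero, hH hE]; exact hr
  exact ⟨_, erase_mem_shadow hE hw⟩

lemma le_minPosCodeg_iff (hr : r ≠ 0) (hH : (H : Set (Finset V)).Sized r) (hne : H.Nonempty) :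
    d ≤ minPosCodeg r H ↔ ∀ e ∈ ∂ H, d ≤ #(nbhd H e) := by
  obtain ⟨e₀, he₀⟩ := shadow_nonempty hr hH hne
  have hvalues : {k | ∃ e ∈ ∂ H, #(nbhd H e) = k}.Nonempty := ⟨_, e₀, he₀, rfl⟩
  rw [minPosCodeg, sshadow_eq_shadow hr hH, le_csInf_iff (OrderBot.bddBelow _) hvalues]
  simp only [Set.mem_ofPred_eq, forall_exists_index, and_imp, forall_apply_eq_imp_iff₂]

lemma exists_mem_superset_disjoint {A F S : Finset V} (hS : ∀ e ∈ ∂ H, #S < #(nbhd H e))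
    (hF : F ∈ H) (hAF : A ⊆ F) (hAS : Disjoint A S) : ∃ F' ∈ H, A ⊆ F' ∧ Disjoint F' S := by
  obtain ⟨F', hF', hmin⟩ :=
    exists_min_image {F ∈ H | A ⊆ F} (fun F => #(F ∩ S)) ⟨F, mem_filter.2 ⟨hF, hAF⟩⟩
  obtain ⟨hF'H, hAF'⟩ := mem_filter.1 hF'
  refine ⟨F', hF'H, hAF', ?_⟩
  by_contra hmeet
  obtain ⟨w, hwF', hwS⟩ := not_disjoint_iff.1 hmeet
  obtain ⟨v, hv, hvS⟩ := exists_mem_notMem_of_card_lt_card (hS _ (erase_mem_shadow hF'H hwF'))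
  have hA : A ⊆ insert v (F'.erase w) :=
    (subset_erase.2 ⟨hAF', disjoint_right.1 hAS hwS⟩).trans (subset_insert _ _)
  have hlt : #(insert v (F'.erase w) ∩ S) < #(F' ∩ S) := by
    rw [insert_inter_of_notMem hvS, erase_inter]
    exact card_erase_lt_of_mem (mem_inter.2 ⟨hwF', hwS⟩)
  exact (hmin _ (mem_filter.2 ⟨mem_nbhd.1 hv, hA⟩)).not_gt hlt

lemma notMem_erase_of_mem_nbhd_erase {w : V} (hH : (H : Set (Finset V)).Sized r) (hE : E ∈ H)
    (hw : w ∈ E) (hv : v ∈ nbhd H (E.erase w)) : v ∉ E.erase w := by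
  intro hvE
  have hmem : E.erase w ∈ H := by simpa only [mem_nbhd, insert_eq_of_mem hvE] using hv
  exact (card_erase_lt_of_mem hw).ne ((hH hmem).trans (hH hE).symm)

omit [Fintype V] in
lemma IsTrFree.not_disjoint {F S : Finset V} (hfree : IsTrFree r H)
    (hH : (H : Set (Finset V)).Sized r) (hab : a ≠ b) (haS : insert a S ∈ H)
    (hbS : insert b S ∈ H) (hF : F ∈ H) (ha : a ∈ F) (hb : b ∈ F) : ¬ Disjoint F S := by
  intro hFS
  have haS' := disjoint_left.1 hFS ha
  have hbF : b ∈ F.erase a := mem_erase.2 ⟨hab.symm, hb⟩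
  have hS : #S = r - 1 := by rw [← hH haS, card_insert_of_notMem haS', Nat.add_sub_cancel]
  have hW : #((F.erase a).erase b) = r - 2 := by
    rw [card_erase_of_mem hbF, card_erase_of_mem ha, hH hF, Nat.sub_sub]
  refine hfree ⟨S, (F.erase a).erase b, a, b, hS, hW, hab, haS', disjoint_left.1 hFS hb,
    by simp, by simp, ?_, haS, hbS, by rwa [insert_erase hbF, insert_erase ha]⟩
  exact hFS.symm.mono_right ((erase_subset _ _).trans (erase_subset _ _))

lemma IsTrFree.pairwiseDisjoint_nbhd_erase (hfree : IsTrFree r H)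
    (hH : (H : Set (Finset V)).Sized r) (hd : ∀ e ∈ ∂ H, r ≤ #(nbhd H e)) (hE : E ∈ H) :
    (E : Set V).PairwiseDisjoint fun i => nbhd H (E.erase i) := by
  intro i hi j hj hij
  refine disjoint_left.2 fun x hxi hxj => ?_
  have hxi' := notMem_erase_of_mem_nbhd_erase hH hE hi hxi
  have hxj' := notMem_erase_of_mem_nbhd_erase hH hE hj hxj
  have hix : i ≠ x := by
    rintro rfl
    exact hxj' (mem_erase.2 ⟨hij, hi⟩)
  have hcard : #(E.erase i) < r := hH hE ▸ card_erase_lt_of_mem hi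
  obtain ⟨F, hF, hixF, hFdisj⟩ : ∃ F ∈ H, {i, x} ⊆ F ∧ Disjoint F (E.erase i) := by
    refine exists_mem_superset_disjoint (fun e he => hcard.trans_le (hd e he))
      (mem_nbhd.1 hxj) ?_ ?_
    · simp [insert_subset_iff, hij, mem_coe.1 hi]
    · rw [disjoint_insert_left, disjoint_singleton_left]
      exact ⟨notMem_erase _ _, hxi'⟩
  rw [insert_subset_iff, singleton_subset_iff] at hixF
  exact hfree.not_disjoint hH hix (by rwa [insert_erase hi]) (mem_nbhd.1 hxi) hF hixF.1 hixF.2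
    hFdisj

lemma IsTrFree.mul_le_card (hfree : IsTrFree r H) (hH : (H : Set (Finset V)).Sized r)
    (hne : H.Nonempty) (hrd : r ≤ d) (hd : ∀ e ∈ ∂ H, d ≤ #(nbhd H e)) :
    r * d ≤ Fintype.card V := by
  obtain ⟨E, hE⟩ := hne
  calc r * d = ∑ _i ∈ E, d := by rw [sum_const, hH hE, smul_eq_mul]
    _ ≤ ∑ i ∈ E, #(nbhd H (E.erase i)) :=
        sum_le_sum fun i hi => hd _ (erase_mem_shadow hE hi)
    _ = #(E.biUnion fun i => nbhd H (E.erase i)) :=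
        (card_biUnion <|
          hfree.pairwiseDisjoint_nbhd_erase hH (fun e he => hrd.trans (hd e he)) hE).symm
    _ ≤ Fintype.card V := card_le_univ _

-- The value `r - 1` is attained by the complete `r`-graph on `2r - 2` vertices.
theorem IsTrFree.minPosCodeg_le_max (hr : r ≠ 0) (hfree : IsTrFree r H)
    (hH : (H : Set (Finset V)).Sized r) (hne : H.Nonempty) :
    minPosCodeg r H ≤ max (r - 1) (Fintype.card V / r) := by
  rw [le_max_iff, or_iff_not_imp_left]
  intro hlarge
  rw [Nat.le_div_iff_mul_le (Nat.pos_of_ne_zero hr), mul_comm]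
  exact hfree.mul_le_card hH hne (by omega) ((le_minPosCodeg_iff hr hH hne).1 le_rfl)

variable {ι α : Type*} [Fintype α] {c : α → ι}

open Classical in
/-- The complete multipartite hypergraph whose parts are the fibres of the colouring `c`: its edges
are the vertex sets on which every colour occurs exactly once. -/
noncomputable def completePartite (c : α → ι) : Finset (Finset α) :=
  {E | Set.BijOn c E Set.univ}

lemma mem_completePartite {E : Finset α} :
    E ∈ completePartite c ↔ Set.BijOn c E Set.univ := by
  simp only [completePartite, mem_filter_univ]

lemma sized_completePartite [Fintype ι] :
    (completePartite c : Set (Finset α)).Sized (Fintype.card ι) := by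
  intro E hE
  rw [← card_univ]
  have hbij := mem_completePartite.1 hE
  exact card_bij (fun v _ => c v) (fun _ _ => mem_univ _) (fun _ hu _ hv => hbij.injOn hu hv)
    fun i _ => by simpa using hbij.surjOn (Set.mem_univ i)

lemma completePartite_nonempty (hc : Function.Surjective c) : (completePartite c).Nonempty := by
  obtain ⟨E, -, hE⟩ := (Set.surjOn_univ.2 hc).exists_bijOn_subset
  exact ⟨E.toFinite.toFinset, mem_completePartite.2 (by rwa [Set.Finite.coe_toFinset])⟩

lemma color_eq_of_insert_mem_completePartite [DecidableEq α] {S : Finset α} {a b : α}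
    (haS : a ∉ S) (ha : insert a S ∈ completePartite c) (hb : insert b S ∈ completePartite c) :
    c a = c b := by
  rw [mem_completePartite] at ha hb
  obtain ⟨u, hu, huc⟩ := hb.surjOn (Set.mem_univ (c a))
  obtain rfl | huS := mem_insert.1 hu
  · exact huc.symm
  · have hua : u = a := ha.injOn (mem_insert_of_mem huS) (mem_insert_self a S) huc
    exact absurd (hua ▸ huS) haS

lemma isTrFree_completePartite [DecidableEq α] : IsTrFree r (completePartite c) := by
  rintro ⟨S, W, a, b, -, -, hab, haS, -, -, -, -, ha, hb, hF⟩
  exact hab <| (mem_completePartite.1 hF).injOn (by simp) (by simp)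
    (color_eq_of_insert_mem_completePartite haS ha hb)

lemma fiber_subset_nbhd_completePartite [DecidableEq α] [DecidableEq ι] {E : Finset α}
    (hE : E ∈ completePartite c) {w : α} (hw : w ∈ E) :
    ({v | c v = c w} : Finset α) ⊆ nbhd (completePartite c) (E.erase w) := by
  intro v hv
  rw [mem_filter_univ] at hv
  have hbij := ((mem_completePartite.1 hE).sdiff_singleton hw).insert (a := v) (by simp [hv])
  rw [mem_nbhd, mem_completePartite, coe_insert, coe_erase]
  simpa [hv] using hbij

lemma le_minPosCodeg_completePartite [DecidableEq α] [Fintype ι] [Nonempty ι] [DecidableEq ι]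
    (hc : Function.Surjective c) (hd : ∀ i, d ≤ #{v | c v = i}) :
    d ≤ minPosCodeg (Fintype.card ι) (completePartite c) := by
  refine (le_minPosCodeg_iff Fintype.card_ne_zero sized_completePartite
    (completePartite_nonempty hc)).2 fun e he => ?_
  obtain ⟨E, hE, w, hw, rfl⟩ := mem_shadow_iff.1 he
  exact (hd (c w)).trans (card_le_card (fiber_subset_nbhd_completePartite hE hw))

lemma exists_coloring_le_card_fiber [Fintype ι] [Nonempty ι] [DecidableEq ι]
    (hcard : Fintype.card ι * d ≤ Fintype.card α) : ∃ c : α → ι, ∀ i, d ≤ #{v | c v = i} := by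
  obtain ⟨f⟩ : Nonempty (ι × Fin d ↪ α) :=
    Function.Embedding.nonempty_of_card_le (by simpa using hcard)
  let c : α → ι := Function.extend f Prod.fst fun _ => Classical.arbitrary ι
  have hcf (p : ι × Fin d) : c (f p) = p.1 := f.injective.extend_apply _ _ p
  refine ⟨c, fun i => ?_⟩
  calc d = #(univ.map ((Function.Embedding.sectR i (Fin d)).trans f)) := by simp
    _ ≤ #{v | c v = i} := card_le_card fun v hv => by
        obtain ⟨j, -, rfl⟩ := mem_map.1 hv
        exact (mem_filter_univ _).2 (hcf (i, j))

lemma exists_isTrFree_le_minPosCodeg (hr : r ≠ 0) (hV : r ≤ Fintype.card V) :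
    ∃ H : Finset (Finset V), (H : Set (Finset V)).Sized r ∧ IsTrFree r H ∧ H.Nonempty ∧
      Fintype.card V / r ≤ minPosCodeg r H := by
  have : NeZero r := ⟨hr⟩
  obtain ⟨c, hc⟩ : ∃ c : V → Fin r, ∀ i, Fintype.card V / r ≤ #{v | c v = i} :=
    exists_coloring_le_card_fiber (by simpa only [Fintype.card_fin] using Nat.mul_div_le _ _)
  have hsurj : Function.Surjective c := fun i => by
    obtain ⟨v, hv⟩ := card_pos.1 ((Nat.div_pos hV (Nat.pos_of_ne_zero hr)).trans_le (hc i))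
    exact ⟨v, (mem_filter_univ v).1 hv⟩
  have hsized := sized_completePartite (c := c)
  have hcodeg := le_minPosCodeg_completePartite hsurj hc
  rw [Fintype.card_fin] at hsized hcodeg
  exact ⟨completePartite c, hsized, isTrFree_completePartite, completePartite_nonempty hsurj,
    hcodeg⟩

lemma mul_pred_le_of_cast_le {r n : ℕ} (hn : ((r : ℝ) - 1) * (2 * r + 1) / 2 ≤ n) :
    r * (r - 1) ≤ n := by
  obtain _ | s := r
  · simp
  · push_cast at hn
    have : ((s + 1) * s : ℝ) ≤ n := by nlinarith [s.cast_nonneg (α := ℝ)]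
    exact_mod_cast this

theorem stmt1_general (hr : 2 ≤ r) (hV : r * (r - 1) ≤ Fintype.card V) :
    IsGreatest {k : ℕ | ∃ H : Finset (Finset V),
      (∀ E ∈ H, #E = r) ∧ IsTrFree r H ∧ H.Nonempty ∧ minPosCodeg r H = k}
      (Fintype.card V / r) := by
  have hr₀ : r ≠ 0 := by omega
  have hdiv : r - 1 ≤ Fintype.card V / r := by
    rwa [Nat.le_div_iff_mul_le (by omega), mul_comm]
  have hupper {H : Finset (Finset V)} (hH : (H : Set (Finset V)).Sized r)
      (hfree : IsTrFree r H) (hne : H.Nonempty) : minPosCodeg r H ≤ Fintype.card V / r :=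
    (hfree.minPosCodeg_le_max hr₀ hH hne).trans (max_le hdiv le_rfl)
  have hrV : r ≤ Fintype.card V := (Nat.le_mul_of_pos_right r (by omega)).trans hV
  obtain ⟨K, hK, hfree, hne, hcodeg⟩ := exists_isTrFree_le_minPosCodeg (V := V) hr₀ hrV
  constructor
  · exact ⟨K, hK, hfree, hne, (hupper hK hfree hne).antisymm hcodeg⟩
  · rintro _ ⟨H, hH, hfree, hne, rfl⟩
    exact hupper hH hfree hne

end

/-- For `r ≥ 3` and `n ≥ (r-1)(2r+1)/2`, the positive codegree Turán number of `T_r`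
equals `⌊n/r⌋`: `⌊n/r⌋` is the maximum of the minimum positive codegree over all
`n`-vertex `T_r`-free `r`-graphs with at least one edge. -/
theorem stmt1 {r n : ℕ} (hr : 3 ≤ r) (hn : ((r : ℝ) - 1) * (2 * r + 1) / 2 ≤ n) :
    IsGreatest {k : ℕ | ∃ H : Finset (Finset (Fin n)),
      (∀ E ∈ H, E.card = r) ∧ IsTrFree r H ∧ H.Nonempty ∧ minPosCodeg r H = k}
      (n / r) := by
  simpa only [Fintype.card_fin] using stmt1_general (V := Fin n) (r := r) (by omega)
    (by simpa only [Fintype.card_fin] using mul_pred_le_of_cast_le hn)
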